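/- Let E and H be complex Hilbert spaces and i : E → H an injective continuous linear map with dense range. Let a : E × E → ℂ be a bounded sesquilinear form that is Hermitian (a(u,v) = conj(a(v,u)) for all u, v ∈ E) and coercive on E relative to H: there exist α > 0 and β ≥ 0 such that a(u,u) + β‖i u‖²_H ≥ α‖u‖²_E for all u ∈ E. Let R : H → H be a bounded linear operator and set 𝐜 = (‖2R‖ + √(‖2R‖² + 4β))/2 where ‖2R‖ = 2‖R‖. Then for every real λ > 𝐜 and every g ∈ H there exists u ∈ E such that a(u,v) + λ⟪2R(i u), i v⟫_H + λ²⟪i u, i v⟫_H = ⟪g, i v⟫_H for all v ∈ E. -/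

import Mathlib

open scoped ComplexInnerProductSpace

/-!
If `z` satisfies `β + ‖z‖ ‖S‖ ≤ re (z ^ 2)`, then the term `z ^ 2 * ‖i u‖ ^ 2` pays both for the
defect `β * ‖i u‖ ^ 2` in the coercivity of `a` and for the perturbation `z * ⟪S (i u), i u⟫`, so
that the perturbed form is coercive on `E` with the same constant `α`, and the Lax–Milgram theorem
applies. For real `z`, the threshold of the theorem is the larger root of `x ^ 2 - ‖S‖ x - β`.
-/

section LaxMilgram

variable {𝕜 E : Type*} [RCLike 𝕜] [NormedAddCommGroup E] [InnerProductSpace 𝕜 E] [CompleteSpace E]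

theorem bijective_continuousLinearMapOfBilin_of_coercive (b : E →L⋆[𝕜] E →L[𝕜] 𝕜) {α : ℝ}
    (hα : 0 < α) (hb : ∀ u, α * ‖u‖ ^ 2 ≤ ‖b u u‖) :
    Function.Bijective (InnerProductSpace.continuousLinearMapOfBilin b) := by
  rw [← ContinuousLinearMap.isUnit_iff_bijective]
  refine ContinuousLinearMap.isUnit_of_forall_le_norm_inner_map _ (c := ⟨α, hα.le⟩) hα fun u ↦ ?_
  rw [InnerProductSpace.continuousLinearMapOfBilin_apply, mul_comm]
  exact hb u

theorem existsUnique_forall_apply_eq_of_coercive (b : E →L⋆[𝕜] E →L[𝕜] 𝕜) {α : ℝ}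
    (hα : 0 < α) (hb : ∀ u, α * ‖u‖ ^ 2 ≤ ‖b u u‖) (ℓ : StrongDual 𝕜 E) :
    ∃! u, ∀ v, b u v = ℓ v := by
  have weak_iff (u : E) : (∀ v, b u v = ℓ v) ↔
      InnerProductSpace.continuousLinearMapOfBilin b u =
        (InnerProductSpace.toDual 𝕜 E).symm ℓ := by
    rw [ext_iff_inner_right 𝕜]
    simp only [InnerProductSpace.continuousLinearMapOfBilin_apply,
      InnerProductSpace.toDual_symm_apply]
  simpa only [weak_iff] using
    (bijective_continuousLinearMapOfBilin_of_coercive b hα hb).existsUnique _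

end LaxMilgram

section PencilForm

variable {𝕜 E H : Type*} [RCLike 𝕜] [NormedAddCommGroup E] [InnerProductSpace 𝕜 E]
  [NormedAddCommGroup H] [InnerProductSpace 𝕜 H]

theorem neg_norm_mul_le_re_mul_inner_map_self (S : H →L[𝕜] H) (z : 𝕜) (h : H) :
    -(‖z‖ * ‖S‖ * ‖h‖ ^ 2) ≤ RCLike.re (z * inner 𝕜 (S h) h) := by
  refine neg_le_of_abs_le ?_
  calc |RCLike.re (z * inner 𝕜 (S h) h)|
      ≤ ‖z‖ * ‖inner 𝕜 (S h) h‖ := (RCLike.abs_re_le_norm _).trans_eq (norm_mul _ _)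
    _ ≤ ‖z‖ * (‖S h‖ * ‖h‖) := by gcongr; exact norm_inner_le_norm _ _
    _ ≤ ‖z‖ * (‖S‖ * ‖h‖ * ‖h‖) := by gcongr; exact S.le_opNorm h
    _ = ‖z‖ * ‖S‖ * ‖h‖ ^ 2 := by ring

/-- The sesquilinear form on `E` of the quadratic operator pencil `z ↦ A + z S + z ^ 2`, where `A`
is given by the form `a` and `S` acts on `H`, into which `E` is mapped by `i`. It is conjugate
linear in the first variable. -/
noncomputable def pencilForm (i : E →L[𝕜] H) (a : E →L⋆[𝕜] E →L[𝕜] 𝕜) (S : H →L[𝕜] H) (z : 𝕜) :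
    E →L⋆[𝕜] E →L[𝕜] 𝕜 :=
  a + z • (innerSL 𝕜).bilinearComp (S ∘L i) i + z ^ 2 • (innerSL 𝕜).bilinearComp i i

theorem pencilForm_apply (i : E →L[𝕜] H) (a : E →L⋆[𝕜] E →L[𝕜] 𝕜) (S : H →L[𝕜] H) (z : 𝕜)
    (u v : E) :
    pencilForm i a S z u v =
      a u v + z * inner 𝕜 (S (i u)) (i v) + z ^ 2 * inner 𝕜 (i u) (i v) :=
  rfl

theorem le_re_pencilForm_self (i : E →L[𝕜] H) (a : E →L⋆[𝕜] E →L[𝕜] 𝕜) {α β : ℝ}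
    (hcoer : ∀ u, α * ‖u‖ ^ 2 ≤ RCLike.re (a u u) + β * ‖i u‖ ^ 2) (S : H →L[𝕜] H) {z : 𝕜}
    (hz : β + ‖z‖ * ‖S‖ ≤ RCLike.re (z ^ 2)) (u : E) :
    α * ‖u‖ ^ 2 ≤ RCLike.re (pencilForm i a S z u u) := by
  have re_sq_mul_inner_self :
      RCLike.re (z ^ 2 * inner 𝕜 (i u) (i u)) = RCLike.re (z ^ 2) * ‖i u‖ ^ 2 := by
    rw [inner_self_eq_norm_sq_to_K, ← RCLike.ofReal_pow, RCLike.re_mul_ofReal]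
  calc α * ‖u‖ ^ 2
      ≤ RCLike.re (a u u) + β * ‖i u‖ ^ 2 := hcoer u
    _ = RCLike.re (a u u) + -(‖z‖ * ‖S‖ * ‖i u‖ ^ 2) + (β + ‖z‖ * ‖S‖) * ‖i u‖ ^ 2 := by ring
    _ ≤ RCLike.re (a u u) + RCLike.re (z * inner 𝕜 (S (i u)) (i u)) +
          RCLike.re (z ^ 2) * ‖i u‖ ^ 2 := by
        gcongr
        exact neg_norm_mul_le_re_mul_inner_map_self S z (i u)
    _ = RCLike.re (pencilForm i a S z u u) := by
        rw [pencilForm_apply, map_add, map_add, re_sq_mul_inner_self]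

theorem resolvent_surjectivity_general [CompleteSpace E] (i : E →L[𝕜] H)
    (a : E →L⋆[𝕜] E →L[𝕜] 𝕜) {α β : ℝ} (hα : 0 < α)
    (hcoer : ∀ u, α * ‖u‖ ^ 2 ≤ RCLike.re (a u u) + β * ‖i u‖ ^ 2) (S : H →L[𝕜] H) {z : 𝕜}
    (hz : β + ‖z‖ * ‖S‖ ≤ RCLike.re (z ^ 2)) (ℓ : StrongDual 𝕜 E) :
    ∃! u, ∀ v,
      a u v + z * inner 𝕜 (S (i u)) (i v) + z ^ 2 * inner 𝕜 (i u) (i v) = ℓ v :=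
  existsUnique_forall_apply_eq_of_coercive (pencilForm i a S z) hα
    (fun u ↦ (le_re_pencilForm_self i a hcoer S hz u).trans (RCLike.re_le_norm _)) ℓ

end PencilForm

theorem add_mul_lt_sq_of_half_add_sqrt_lt {s β x : ℝ} (hx : (s + √(s ^ 2 + 4 * β)) / 2 < x) :
    β + x * s < x ^ 2 := by
  have discrim_lt : s ^ 2 + 4 * β < (2 * x - s) ^ 2 := Real.lt_sq_of_sqrt_lt (by linarith)
  linarith

theorem add_norm_mul_le_re_sq_of_half_add_sqrt_lt {𝕜 : Type*} [RCLike 𝕜] {s β x : ℝ} (hs : 0 ≤ s)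
    (hx : (s + √(s ^ 2 + 4 * β)) / 2 < x) :
    β + ‖(x : 𝕜)‖ * s ≤ RCLike.re ((x : 𝕜) ^ 2) := by
  have x_nonneg : 0 ≤ x := le_trans (by positivity) hx.le
  rw [RCLike.norm_of_nonneg x_nonneg, ← RCLike.ofReal_pow, RCLike.ofReal_re]
  exact (add_mul_lt_sq_of_half_add_sqrt_lt hx).le

theorem resolvent_surjectivity
    {E H : Type*}
    [NormedAddCommGroup E] [InnerProductSpace ℂ E] [CompleteSpace E]
    [NormedAddCommGroup H] [InnerProductSpace ℂ H] [CompleteSpace H]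
    (i : E →L[ℂ] H) (hinj : Function.Injective i) (hdense : DenseRange i)
    (a : E →L⋆[ℂ] E →L[ℂ] ℂ)
    (herm : ∀ u v : E, a u v = starRingEnd ℂ (a v u))
    (α β : ℝ) (hα : 0 < α) (hβ : 0 ≤ β)
    (hcoer : ∀ u : E, α * ‖u‖ ^ 2 ≤ (a u u).re + β * ‖i u‖ ^ 2)
    (R : H →L[ℂ] H) :
    ∀ lam : ℝ,
      (‖(2 : ℂ) • R‖ + Real.sqrt (‖(2 : ℂ) • R‖ ^ 2 + 4 * β)) / 2 < lam →
      ∀ g : H, ∃ u : E, ∀ v : E,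
        a u v + (lam : ℂ) * ⟪((2 : ℂ) • R) (i u), i v⟫
          + ((lam : ℂ)) ^ 2 * ⟪i u, i v⟫ = ⟪g, i v⟫ := by
  intro lam hlam g
  have hz := add_norm_mul_le_re_sq_of_half_add_sqrt_lt (𝕜 := ℂ) (norm_nonneg _) hlam
  exact (resolvent_surjectivity_general i a hα hcoer _ hz (innerSL ℂ g ∘L i)).exists
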